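/- In any magma with a unary operation ' satisfying the identities x·(x'·x) = x and x·(x'·(y·(y'·((z·u)'·w')'))) = y·(y'·(x·(x'·((w·z)·u)))), the identity x'' = x holds. -/

import Mathlib

/-!
Write `a ⊙ b = (b⁻¹ a⁻¹)⁻¹` and `e_x z = x (x⁻¹ z)`, so that `e_x x = x`. The second identity says
`e_x e_y (w ⊙ (z u)) = e_y e_x ((w z) u)`; choosing `x` and `y` among the two products gives
`w ⊙ (z u) = (w z) u`, and then the maps `e_x` commute with each other.

Now `x ⊙ (x⁻¹ ⊙ x) = x`, which spells out as `((x⁻¹ x⁻¹⁻¹)⁻¹⁻¹ x⁻¹)⁻¹ = x`. This makes `x ↦ x⁻¹` a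
bijection and exhibits `x ↦ (x x⁻¹)⁻¹⁻¹ x` as the inverse of `x ↦ x⁻¹⁻¹`. Since `a x` determines
`a ⊙ x`, injectivity turns `a x = b x` into `x⁻¹ a⁻¹ = x⁻¹ b⁻¹`; by such cancellations one obtains
successively `x⁻¹ (x x⁻¹) = x⁻¹`, `x⁻¹⁻¹ x⁻¹ = x x⁻¹ = x⁻¹⁻¹ x⁻¹⁻¹⁻¹` and `x⁻¹⁻¹⁻¹⁻¹ x⁻¹ = x x⁻¹`.
Hence, for `a = x⁻¹` and `b = a⁻¹⁻¹`, the map `e_a e_b = e_b e_a` sends `a` both to `a` and to `b`.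
-/

/-- Magmas with a unary operation `⁻¹` satisfying the two identities of the theorem. -/
class TwoBase (S : Type*) extends Mul S, Inv S where
  mul_inv_mul_self (x : S) : x * (x⁻¹ * x) = x
  mul_inv_mul_swap (x y z u w : S) :
    x * (x⁻¹ * (y * (y⁻¹ * ((z * u)⁻¹ * w⁻¹)⁻¹))) = y * (y⁻¹ * (x * (x⁻¹ * (w * z * u))))

namespace TwoBase

variable {S : Type*} [TwoBase S]

/-- The twisted product `(b⁻¹ * a⁻¹)⁻¹`, which is `a * b` in a group. It replaces associativity:
see `twist_mul`. -/
def twist (a b : S) : S := (b⁻¹ * a⁻¹)⁻¹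

local infix:70 "⊙" => twist

theorem twist_mul (z x y : S) : z ⊙ (x * y) = z * x * y := by
  let e (a b : S) : S := a * (a⁻¹ * b)
  have e_self (a : S) : e a a = a := mul_inv_mul_self a
  let t := z ⊙ (x * y)
  let p := z * x * y
  have swap (a b : S) : e a (e b t) = e b (e a p) := mul_inv_mul_swap a b x y z
  have e_p_t : e p t = e t p := by simpa only [e_self] using swap p t
  calc t = e t (e t t) := by rw [e_self, e_self]
    _ = e t (e t p) := swap t t
    _ = e t (e p t) := by rw [e_p_t]
    _ = e p (e t p) := swap t p
    _ = e p (e p t) := by rw [e_p_t]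
    _ = e p (e p p) := swap p p
    _ = p := by rw [e_self, e_self]

theorem mul_inv_mul_left_comm (x y z : S) :
    x * (x⁻¹ * (y * (y⁻¹ * z))) = y * (y⁻¹ * (x * (x⁻¹ * z))) := by
  have comm_mul_mul (a b c : S) :
      x * (x⁻¹ * (y * (y⁻¹ * (a * b * c)))) = y * (y⁻¹ * (x * (x⁻¹ * (a * b * c)))) :=
    calc x * (x⁻¹ * (y * (y⁻¹ * (a * b * c))))
      _ = x * (x⁻¹ * (y * (y⁻¹ * (a ⊙ (b * c))))) := by rw [twist_mul]
      _ = y * (y⁻¹ * (x * (x⁻¹ * (a * b * c)))) := mul_inv_mul_swap x y b c a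
  simpa only [mul_inv_mul_self] using comm_mul_mul z (z⁻¹ * z) (z⁻¹ * z)

theorem mul_inv_mul_mul_inv_mul_self (x y : S) :
    x * (x⁻¹ * (y * (y⁻¹ * x))) = y * (y⁻¹ * x) := by
  rw [mul_inv_mul_left_comm, mul_inv_mul_self]

theorem twist_eq_mul_mul (x y : S) : x ⊙ y = x * y * (y⁻¹ * y) := by
  rw [← twist_mul, mul_inv_mul_self]

theorem twist_twist_mul (x y z w : S) : x ⊙ (y ⊙ (z * w)) = x * (y * z) * w := by
  rw [twist_mul, twist_mul]

theorem twist_inv_twist_mul (x y : S) : x ⊙ (x⁻¹ ⊙ (x * y)) = x * y := by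
  rw [twist_twist_mul, mul_inv_mul_self]

theorem twist_inv_twist_self (x : S) : x ⊙ (x⁻¹ ⊙ x) = x := by
  simpa only [mul_inv_mul_self] using twist_inv_twist_mul x (x⁻¹ * x)

theorem inv_twist_mul_inv (x y z : S) : ((z ⊙ y) * x⁻¹)⁻¹ = x * y⁻¹ * z⁻¹ :=
  twist_mul x y⁻¹ z⁻¹

theorem mul_inv_mul_mul_inv_mul (x y : S) : x * (x⁻¹ * y) * (y⁻¹ * x) = y * (y⁻¹ * x) := by
  set f := y * (y⁻¹ * x)
  have fix_f : x * (x⁻¹ * f) = f := mul_inv_mul_mul_inv_mul_self x y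
  calc x * (x⁻¹ * y) * (y⁻¹ * x) = x ⊙ (x⁻¹ ⊙ f) := (twist_twist_mul ..).symm
    _ = x ⊙ (x⁻¹ ⊙ (x * (x⁻¹ * f))) := by rw [fix_f]
    _ = f := by rw [twist_inv_twist_mul, fix_f]

/-- The inverse of the map `x ↦ x⁻¹⁻¹`; the formula is read off from `twist_inv_twist_self`. -/
def invInvSymm (x : S) : S := (x * x⁻¹)⁻¹⁻¹ * x

theorem inv_invInvSymm_inv (x : S) : (invInvSymm x⁻¹)⁻¹ = x :=
  twist_inv_twist_self x

theorem inv_invInvSymm (x : S) : (invInvSymm x)⁻¹ = invInvSymm x⁻¹ := by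
  simpa only [inv_invInvSymm_inv x] using inv_invInvSymm_inv (invInvSymm x⁻¹)

theorem inv_inv_invInvSymm (x : S) : (invInvSymm x)⁻¹⁻¹ = x := by
  rw [inv_invInvSymm, inv_invInvSymm_inv]

theorem invInvSymm_inv_inv (x : S) : invInvSymm x⁻¹⁻¹ = x := by
  rw [← inv_invInvSymm, inv_invInvSymm_inv]

theorem inv_injective : Function.Injective (Inv.inv : S → S) :=
  Function.LeftInverse.injective (g := fun y ↦ invInvSymm y⁻¹) invInvSymm_inv_inv

section RightCongruence

variable {a b x : S}

theorem inv_mul_inv_congr (h : a * x = b * x) : x⁻¹ * a⁻¹ = x⁻¹ * b⁻¹ := by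
  have twist_congr : a ⊙ x = b ⊙ x := by rw [twist_eq_mul_mul, twist_eq_mul_mul, h]
  exact inv_injective twist_congr

theorem mul_inv_mul_inv_congr (h : a * x = b * x) (z : S) : z * x⁻¹ * a⁻¹ = z * x⁻¹ * b⁻¹ := by
  rw [← twist_mul, ← twist_mul, inv_mul_inv_congr h]

theorem mul_mul_congr (h : a * x = b * x) (z : S) : z * a * x = z * b * x := by
  rw [← twist_mul, ← twist_mul, h]

theorem twist_mul_congr (h : a * x = b * x) (z : S) : (z ⊙ a) * x = (z ⊙ b) * x := by
  let v := invInvSymm x⁻¹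
  have inv_v : v⁻¹ = x := inv_invInvSymm_inv x
  have mul_inv_v : v * a⁻¹ = v * b⁻¹ := mul_inv_mul_inv_congr h _
  apply inv_injective
  calc ((z ⊙ a) * x)⁻¹ = ((z ⊙ a) * v⁻¹)⁻¹ := by rw [inv_v]
    _ = v * a⁻¹ * z⁻¹ := inv_twist_mul_inv v a z
    _ = v * b⁻¹ * z⁻¹ := by rw [mul_inv_v]
    _ = ((z ⊙ b) * v⁻¹)⁻¹ := (inv_twist_mul_inv v b z).symm
    _ = ((z ⊙ b) * x)⁻¹ := by rw [inv_v]

end RightCongruence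

theorem inv_mul_mul_inv_mul (x : S) : x⁻¹ * (x * x⁻¹) * x = x⁻¹ * x := by
  let t := (x⁻¹ * x)⁻¹ * (x⁻¹ * x)
  have mul_t : x * t = x * x⁻¹ * x :=
    calc x * t = x ⊙ (x⁻¹ * x) := by rw [twist_eq_mul_mul, mul_inv_mul_self]
      _ = x * x⁻¹ * x := twist_mul ..
  calc x⁻¹ * (x * x⁻¹) * x = x⁻¹ ⊙ (x * t) := by rw [mul_t, twist_mul]
    _ = x⁻¹ * x * t := twist_mul ..
    _ = x⁻¹ * x := mul_inv_mul_self _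

theorem inv_mul_mul_inv_mul_inv_inv (x : S) :
    x⁻¹ * (x * x⁻¹) * x⁻¹⁻¹ = x⁻¹ * x⁻¹⁻¹ := by
  set u := x⁻¹ * (x * x⁻¹) with hu
  have inv_mul_inv_twist : x⁻¹ * (x⁻¹⁻¹ ⊙ u)⁻¹ = x⁻¹ * (x⁻¹⁻¹ ⊙ x⁻¹)⁻¹ :=
    inv_mul_inv_congr (twist_mul_congr (inv_mul_mul_inv_mul x) _)
  apply inv_injective
  calc (u * x⁻¹⁻¹)⁻¹ = ((x⁻¹ ⊙ (x⁻¹⁻¹ ⊙ u)) * x⁻¹⁻¹)⁻¹ := by rw [hu, twist_inv_twist_mul]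
    _ = x⁻¹ * (x⁻¹⁻¹ ⊙ u)⁻¹ * x⁻¹⁻¹ := inv_twist_mul_inv ..
    _ = x⁻¹ * (x⁻¹⁻¹ ⊙ x⁻¹)⁻¹ * x⁻¹⁻¹ := by rw [inv_mul_inv_twist]
    _ = ((x⁻¹ ⊙ (x⁻¹⁻¹ ⊙ x⁻¹)) * x⁻¹⁻¹)⁻¹ := (inv_twist_mul_inv ..).symm
    _ = (x⁻¹ * x⁻¹⁻¹)⁻¹ := by rw [twist_inv_twist_self]

theorem inv_mul_mul_inv (x : S) : x⁻¹ * (x * x⁻¹) = x⁻¹ := by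
  set u := x⁻¹ * (x * x⁻¹)
  have u_mul : u * x = x⁻¹ * x := inv_mul_mul_inv_mul x
  have u_mul_inv : u * u⁻¹ = x⁻¹ * x⁻¹⁻¹ :=
    calc u * u⁻¹ = x⁻¹ ⊙ (x * x⁻¹ * u⁻¹) := (twist_mul ..).symm
      _ = x⁻¹ ⊙ (x * x⁻¹ * x⁻¹⁻¹) := by rw [mul_inv_mul_inv_congr u_mul]
      _ = u * x⁻¹⁻¹ := twist_mul ..
      _ = x⁻¹ * x⁻¹⁻¹ := inv_mul_mul_inv_mul_inv_inv x
  -- `s` solves `s⁻¹ = u`, so the goal amounts to `s = x`.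
  obtain ⟨s, inv_s, inv_mul_s⟩ : ∃ s, s⁻¹ = u ∧ x⁻¹ * s = x⁻¹ * x := by
    refine ⟨(invInvSymm u)⁻¹, inv_inv_invInvSymm u, ?_⟩
    have invInvSymm_u : invInvSymm u = (x⁻¹ * x⁻¹⁻¹)⁻¹⁻¹ * u := by rw [← u_mul_inv]; rfl
    calc x⁻¹ * (invInvSymm u)⁻¹ = x⁻¹ * (invInvSymm x⁻¹)⁻¹ := by
          rw [invInvSymm_u]
          exact inv_mul_inv_congr (mul_mul_congr u_mul _)
      _ = x⁻¹ * x := by rw [inv_invInvSymm_inv]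
  have u_mul_s : u * s = x⁻¹ * x :=
    calc u * s = x⁻¹ ⊙ (x ⊙ (x⁻¹ * s)) := (twist_twist_mul ..).symm
      _ = x⁻¹ ⊙ (x ⊙ (x⁻¹ * x)) := by rw [inv_mul_s]
      _ = u * x := twist_twist_mul ..
      _ = x⁻¹ * x := u_mul
  have s_eq : s = x :=
    calc s = s * (s⁻¹ * s) := (mul_inv_mul_self s).symm
      _ = s * (s⁻¹ * x) := by rw [inv_s, u_mul_s, u_mul]
      _ = x * (x⁻¹ * s) * (s⁻¹ * x) := (mul_inv_mul_mul_inv_mul x s).symm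
      _ = x := by rw [inv_mul_s, inv_s, u_mul, mul_inv_mul_self, mul_inv_mul_self]
  rw [← inv_s, s_eq]

theorem inv_inv_mul_inv (x : S) : x⁻¹⁻¹ * x⁻¹ = x * x⁻¹ := by
  set b := x * x⁻¹
  set c := x⁻¹⁻¹ * x⁻¹
  have inv_mul_b : x⁻¹ * b = x⁻¹ := inv_mul_mul_inv x
  have inv_mul_c : x⁻¹ * c = x⁻¹ := mul_inv_mul_self x⁻¹
  have b_mul_b : b * b = b * c :=
    calc b * b = x ⊙ (x⁻¹ * b) := (twist_mul ..).symm
      _ = x ⊙ (x⁻¹ * c) := by rw [inv_mul_b, inv_mul_c]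
      _ = b * c := twist_mul ..
  have inv_c : c⁻¹ = b * c := twist_eq_mul_mul x x⁻¹
  have inv_c_mul_b : c⁻¹ * b = c⁻¹ * c :=
    calc c⁻¹ * b = b * b * b := by rw [inv_c, b_mul_b]
      _ = b ⊙ (b * b) := (twist_mul ..).symm
      _ = b ⊙ (b * c) := by rw [b_mul_b]
      _ = b * b * c := twist_mul ..
      _ = c⁻¹ * c := by rw [inv_c, b_mul_b]
  have fix_b : c * (c⁻¹ * b) = b := by
    simpa only [inv_mul_c] using mul_inv_mul_mul_inv_mul_self c x
  calc c = c * (c⁻¹ * c) := (mul_inv_mul_self c).symm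
    _ = b := by rw [← inv_c_mul_b, fix_b]

theorem inv_inv_mul_inv_inv_inv (x : S) : x⁻¹⁻¹ * x⁻¹⁻¹⁻¹ = x * x⁻¹ := by
  have inv_eq : (x⁻¹⁻¹ * x⁻¹⁻¹⁻¹)⁻¹ = (x * x⁻¹)⁻¹ :=
    calc (x⁻¹⁻¹ * x⁻¹⁻¹⁻¹)⁻¹ = x⁻¹⁻¹ ⊙ x⁻¹ := rfl
      _ = x⁻¹⁻¹ * x⁻¹ * (x⁻¹⁻¹ * x⁻¹) := twist_eq_mul_mul ..
      _ = x * x⁻¹ * (x⁻¹⁻¹ * x⁻¹) := by rw [inv_inv_mul_inv]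
      _ = x ⊙ x⁻¹ := (twist_eq_mul_mul ..).symm
      _ = (x⁻¹⁻¹ * x⁻¹)⁻¹ := rfl
      _ = (x * x⁻¹)⁻¹ := by rw [inv_inv_mul_inv]
  exact inv_injective inv_eq

theorem mul_inv_inv_inv (x : S) : x * x⁻¹⁻¹⁻¹ = x * x⁻¹ := by
  obtain ⟨e, e_mul⟩ : ∃ e, e * x⁻¹⁻¹ = x := ⟨_, invInvSymm_inv_inv x⟩
  calc x * x⁻¹⁻¹⁻¹ = e * x⁻¹⁻¹ * x⁻¹⁻¹⁻¹ := by rw [e_mul]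
    _ = e ⊙ (x⁻¹⁻¹ * x⁻¹⁻¹⁻¹) := (twist_mul ..).symm
    _ = e ⊙ (x⁻¹⁻¹ * x⁻¹) := by rw [inv_inv_mul_inv_inv_inv, inv_inv_mul_inv]
    _ = e * x⁻¹⁻¹ * x⁻¹ := twist_mul ..
    _ = x * x⁻¹ := by rw [e_mul]

theorem inv_inv_inv_inv_mul_inv (x : S) : x⁻¹⁻¹⁻¹⁻¹ * x⁻¹ = x * x⁻¹ := by
  have mul_inv_inv_inv_eq : x * x⁻¹⁻¹⁻¹ = x⁻¹⁻¹ * x⁻¹⁻¹⁻¹ := by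
    rw [mul_inv_inv_inv, inv_inv_mul_inv_inv_inv]
  calc x⁻¹⁻¹⁻¹⁻¹ * x⁻¹ = x⁻¹⁻¹⁻¹⁻¹ * x⁻¹⁻¹⁻¹ := inv_mul_inv_congr mul_inv_inv_inv_eq
    _ = x⁻¹⁻¹ * x⁻¹⁻¹⁻¹ := inv_inv_mul_inv x⁻¹⁻¹
    _ = x * x⁻¹ := inv_inv_mul_inv_inv_inv x

theorem inv_inv_inv (x : S) : x⁻¹⁻¹⁻¹ = x⁻¹ := by
  have fix_inv : x⁻¹⁻¹⁻¹ * (x⁻¹⁻¹⁻¹⁻¹ * x⁻¹) = x⁻¹⁻¹⁻¹ := by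
    rw [inv_inv_inv_inv_mul_inv, ← inv_inv_mul_inv_inv_inv, inv_mul_mul_inv x⁻¹⁻¹]
  calc x⁻¹⁻¹⁻¹ = x⁻¹⁻¹⁻¹ * (x⁻¹⁻¹⁻¹⁻¹ * x⁻¹) := fix_inv.symm
    _ = x⁻¹ * (x⁻¹⁻¹ * (x⁻¹⁻¹⁻¹ * (x⁻¹⁻¹⁻¹⁻¹ * x⁻¹))) := (mul_inv_mul_mul_inv_mul_self ..).symm
    _ = x⁻¹ * (x⁻¹⁻¹ * x⁻¹⁻¹⁻¹) := by rw [fix_inv]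
    _ = x⁻¹ := by rw [inv_inv_mul_inv_inv_inv, inv_mul_mul_inv]

theorem inv_inv (x : S) : x⁻¹⁻¹ = x :=
  inv_injective (inv_inv_inv x)

end TwoBase

theorem two_base_implies_involution {S : Type*} (m : S → S → S) (i : S → S)
    (hA : ∀ x, m x (m (i x) x) = x)
    (hB : ∀ x y z u w,
      m x (m (i x) (m y (m (i y) (i (m (i (m z u)) (i w)))))) =
      m y (m (i y) (m x (m (i x) (m (m w z) u))))) :
    ∀ x, i (i x) = x := by
  let _ : TwoBase S :=
    { mul := m, inv := i, mul_inv_mul_self := hA, mul_inv_mul_swap := hB }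
  exact TwoBase.inv_inv
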